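/- For lazy random walk on a finite connected graph G with n ≥ 2 vertices, the relaxation time satisfies t_rel ≤ max_{x,y} (E_x[τ_y] + E_y[τ_x]) ≤ 6 (d_avg/d_min) n² − 4. -/

import Mathlib

open Finset

variable {V : Type*}

noncomputable def pip [Fintype V] (pi f g : V → ℝ) : ℝ := ∑ x, pi x * f x * g x

noncomputable def secondEig [Fintype V] (pi : V → ℝ) (P : Matrix V V ℝ) : ℝ :=
  sSup {r : ℝ | ∃ f : V → ℝ, pip pi f f = 1 ∧ (∑ x, pi x * f x) = 0 ∧ r = pip pi f (P.mulVec f)}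

noncomputable def trelT [Fintype V] (pi : V → ℝ) (P : Matrix V V ℝ) : ℝ := 1 / (1 - secondEig pi P)

noncomputable def Dmat [Fintype V] [DecidableEq V] (h : V) : Matrix V V ℝ :=
  Matrix.diagonal fun y => if y = h then 0 else 1

noncomputable def opNorm [Fintype V] (pi : V → ℝ) (A : Matrix V V ℝ) : ℝ :=
  sSup {r : ℝ | ∃ f : V → ℝ, pip pi f f ≤ 1 ∧ r = Real.sqrt (pip pi (A.mulVec f) (A.mulVec f))}

/-- probability, starting at `y`, that the chain avoids `x` during steps `0..t`
(i.e. `P_y(τ_x > t)`), written as a sum over length-`t` paths. -/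
noncomputable def survProb [Fintype V] [DecidableEq V] (P : Matrix V V ℝ) (x y : V) (t : ℕ) : ℝ :=
  ∑ p : Fin (t+1) → V,
    if p 0 = y ∧ (∀ s, p s ≠ x) then ∏ s : Fin t, P (p s.castSucc) (p s.succ) else 0

/-- `Ehit P x y = E_y[τ_x]`, via `E[τ] = ∑_t P(τ > t)`. -/
noncomputable def Ehit [Fintype V] [DecidableEq V] (P : Matrix V V ℝ) (x y : V) : ℝ :=
  ∑' t : ℕ, survProb P x y t

noncomputable def thit [Fintype V] [DecidableEq V] (P : Matrix V V ℝ) : ℝ :=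
  ⨆ q : V × V, Ehit P q.1 q.2

/-- expected hitting time of `x` when the initial state has law `μ`. -/
noncomputable def EhitFrom [Fintype V] [DecidableEq V] (P : Matrix V V ℝ) (μ : V → ℝ) (x : V) : ℝ :=
  ∑' t : ℕ, ∑ y, μ y * survProb P x y t

/-- probability, starting from `pi`, that `X_s ≠ h s` for all `0 ≤ s ≤ t`. -/
noncomputable def avoidProb [Fintype V] [DecidableEq V] (pi : V → ℝ) (P : Matrix V V ℝ)
    (t : ℕ) (h : Fin (t+1) → V) : ℝ :=
  ∑ p : Fin (t+1) → V,
    if ∀ s, p s ≠ h s then pi (p 0) * ∏ s : Fin t, P (p s.castSucc) (p s.succ) else 0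

/-- expected number of visits to `x` strictly before hitting `A`, started at `x`. -/
noncomputable def visitsBeforeHit [Fintype V] [DecidableEq V] (P : Matrix V V ℝ)
    (A : Finset V) (x : V) : ℝ :=
  ∑' t : ℕ, ∑ p : Fin (t+1) → V,
    if p 0 = x ∧ p (Fin.last t) = x ∧ (∀ s, p s ∉ A) then
      ∏ s : Fin t, P (p s.castSucc) (p s.succ) else 0

noncomputable def lazyP [Fintype V] [DecidableEq V] (G : SimpleGraph V) [DecidableRel G.Adj] :
    Matrix V V ℝ :=
  Matrix.of fun x y => if x = y then 1/2 else if G.Adj x y then 1/(2 * (G.degree x : ℝ)) else 0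

noncomputable def lazyPi [Fintype V] [DecidableEq V] (G : SimpleGraph V) [DecidableRel G.Adj] :
    V → ℝ :=
  fun x => (G.degree x : ℝ) / ∑ v, (G.degree v : ℝ)

noncomputable def dminR [Fintype V] [Nonempty V] [DecidableEq V] (G : SimpleGraph V)
    [DecidableRel G.Adj] : ℝ :=
  Finset.univ.inf' Finset.univ_nonempty fun v => (G.degree v : ℝ)

noncomputable def davgR [Fintype V] [DecidableEq V] (G : SimpleGraph V) [DecidableRel G.Adj] : ℝ :=
  (∑ v, (G.degree v : ℝ)) / Fintype.card V

noncomputable def Pstar [Fintype V] [DecidableEq V] (pi : V → ℝ) (γ : ℝ) : Matrix V V ℝ :=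
  Matrix.of fun x y => (1 - γ) * (if x = y then 1 else 0) + γ * pi y

/-!
For a reversible irreducible chain with Dirichlet form `E(f, g) = ⟨f, (I - P) g⟩_π`, the hitting
times `h_y(v) = E_v[τ_y]` satisfy `π (I - P) h_y = π - δ_y`, so that
`E(f, h_y - h_x) = f x - f y` and `E(h_y - h_x, h_y - h_x)` is the commute time `C(x, y)`.
Cauchy–Schwarz then gives `(f x - f y)² ≤ C(x, y) E(f, f)`; averaging over independent `x, y ∼ π`
yields a Poincaré inequality with constant `max C / 2`, which bounds the relaxation time.

Conversely, a single edge contributes `π(x) P(x, y) C(x, y)²` to `E(h_y - h_x, h_y - h_x)`, so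
`C(x, y) ≤ 1 / (π(x) P(x, y))`. For the lazy walk this is the sum of all degrees times two, and
commute times add up along a geodesic. A vertex has at most three neighbours on a geodesic, so
counting pairs of adjacent vertices bounds its number of vertices by `3 n / d_min`.
-/

section HittingTimes

open scoped Matrix

variable [Fintype V] [DecidableEq V] {P : Matrix V V ℝ}

theorem survProb_zero (P : Matrix V V ℝ) (x y : V) :
    survProb P x y 0 = if y = x then 0 else 1 := by
  have avoids (p : Fin 1 → V) :
      (if p 0 = y ∧ (∀ s, p s ≠ x) then ∏ s : Fin 0, P (p s.castSucc) (p s.succ) else 0) =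
        if p 0 = y then if y = x then 0 else 1 else 0 := by
    by_cases hp : p 0 = y <;> simp [hp, Fin.forall_fin_one]
  simp only [survProb, avoids]
  exact (Fintype.sum_equiv (Equiv.funUnique (Fin 1) V) _
    (fun a => if a = y then if y = x then (0 : ℝ) else 1 else 0) fun _ => rfl).trans
      (Fintype.sum_ite_eq' y _)

theorem mulVec_survProb (P : Matrix V V ℝ) (x y : V) (t : ℕ) :
    (P *ᵥ fun z => survProb P x z t) y =
      ∑ q : Fin (t + 1) → V, if ∀ s, q s ≠ x then
        P y (q 0) * ∏ s : Fin t, P (q s.castSucc) (q s.succ) else 0 := by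
  simp only [Matrix.mulVec, dotProduct, survProb, Finset.mul_sum, mul_ite, mul_zero, ite_and]
  rw [Finset.sum_comm]
  exact Finset.sum_congr rfl fun q _ => Fintype.sum_ite_eq (q 0) _

theorem survProb_succ (P : Matrix V V ℝ) (x y : V) (t : ℕ) :
    survProb P x y (t + 1) = if y = x then 0 else (P *ᵥ fun z => survProb P x z t) y := by
  let weight (a : V) (q : Fin (t + 1) → V) : ℝ :=
    if a = y then if a = x then 0 else if ∀ s, q s ≠ x then
      P a (q 0) * ∏ s : Fin t, P (q s.castSucc) (q s.succ) else 0 else 0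
  have split : survProb P x y (t + 1) = ∑ a, ∑ q, weight a q := by
    rw [← Fintype.sum_prod_type', survProb,
      ← Fintype.sum_equiv (Fin.consEquiv fun _ : Fin (t + 2) => V) (fun aq => weight aq.1 aq.2)]
    rintro ⟨a, q⟩
    simp only [weight, Fin.prod_univ_succ (n := t), Fin.consEquiv_apply,
      Fin.forall_fin_succ (n := t + 1), Fin.cons_zero, Fin.cons_succ, Fin.castSucc_zero,
      ← Fin.succ_castSucc, ite_and, ne_eq, ite_not]
  rw [split, Fintype.sum_eq_single y fun a ha => by simp [weight, ha], mulVec_survProb]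
  by_cases hy : y = x <;> simp [weight, hy]

theorem survProb_nonneg (hP : ∀ a b, 0 ≤ P a b) (x y : V) (t : ℕ) : 0 ≤ survProb P x y t := by
  refine Finset.sum_nonneg fun p _ => ?_
  split_ifs
  · exact Finset.prod_nonneg fun s _ => hP _ _
  · exact le_rfl

theorem eq_of_forall_le_of_mulVec_le (hP : P ∈ Matrix.rowStochastic ℝ V) {f : V → ℝ} {u w : V}
    (hmin : ∀ v, f u ≤ f v) (hu : (P *ᵥ f) u ≤ f u) (huw : 0 < P u w) : f w = f u := by
  have excess_nonneg : ∀ v ∈ univ, 0 ≤ P u v * (f v - f u) := fun v _ =>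
    mul_nonneg (Matrix.nonneg_of_mem_rowStochastic hP) (sub_nonneg.2 (hmin v))
  have sum_excess : ∑ v, P u v * (f v - f u) = (P *ᵥ f) u - f u := by
    simp only [mul_sub, sum_sub_distrib, ← sum_mul, Matrix.sum_row_of_mem_rowStochastic hP, one_mul]
    rfl
  have excess_eq_zero := (sum_eq_zero_iff_of_nonneg excess_nonneg).1
    (le_antisymm (by linarith) (sum_nonneg excess_nonneg)) w (mem_univ w)
  exact sub_eq_zero.1 ((mul_eq_zero.1 excess_eq_zero).resolve_left huw.ne')

theorem nonneg_of_mulVec_le (hP : P ∈ Matrix.rowStochastic ℝ V) (hirr : P.IsIrreducible)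
    {f : V → ℝ} {x : V} (hx : 0 ≤ f x) (hf : ∀ v, v ≠ x → (P *ᵥ f) v ≤ f v) (v : V) :
    0 ≤ f v := by
  have : Nonempty V := ⟨x⟩
  obtain ⟨m, hm⟩ := Finite.exists_min f
  let := P.toQuiver
  have min_spreads : ∀ {u : V}, Quiver.Path m u → f u = f m ∨ f x = f m := by
    intro u p
    induction p with
    | nil => exact Or.inl rfl
    | @cons b c _ e ih =>
      refine ih.elim (fun hb => ?_) Or.inr
      by_cases hbx : b = x
      · exact Or.inr (hbx ▸ hb)
      · exact Or.inl ((eq_of_forall_le_of_mulVec_le hP (by rwa [hb]) (hf b hbx) e.down).trans hb)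
  obtain ⟨p, -⟩ := hirr.connected m x
  have hxm : f x = f m := (min_spreads p).elim id id
  exact hx.trans (hxm.trans_le (hm v))

theorem Dmat_mulVec (x : V) (f : V → ℝ) (y : V) :
    (Dmat x *ᵥ f) y = if y = x then 0 else f y := by
  simp [Dmat, Matrix.mulVec_diagonal]

theorem isUnit_one_sub_Dmat_mul (hP : P ∈ Matrix.rowStochastic ℝ V) (hirr : P.IsIrreducible)
    (x : V) : IsUnit (1 - Dmat x * P) := by
  have ker_nonneg : ∀ f : V → ℝ, (1 - Dmat x * P) *ᵥ f = 0 → ∀ v, 0 ≤ f v := by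
    intro f hf
    have fixed (v : V) : f v = if v = x then 0 else (P *ᵥ f) v := by
      rw [← Dmat_mulVec, Matrix.mulVec_mulVec]
      rw [Matrix.sub_mulVec, Matrix.one_mulVec, sub_eq_zero] at hf
      exact congrFun hf v
    refine nonneg_of_mulVec_le hP hirr (x := x) ?_ fun v hv => ?_
    · rw [fixed x, if_pos rfl]
    · rw [fixed v, if_neg hv]
  refine Matrix.mulVec_injective_iff_isUnit.1
    ((injective_iff_map_eq_zero (Matrix.mulVecLin (1 - Dmat x * P))).2 fun f hf => ?_)
  have hnonpos := ker_nonneg (-f) (by rw [Matrix.mulVec_neg, neg_eq_zero]; exact hf)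
  exact funext fun v => le_antisymm (neg_nonneg.1 (hnonpos v)) (ker_nonneg f hf v)

theorem exists_nonneg_eq_one_add_mulVec (hP : P ∈ Matrix.rowStochastic ℝ V)
    (hirr : P.IsIrreducible) (x : V) :
    ∃ f : V → ℝ, (∀ v, 0 ≤ f v) ∧ ∀ v, f v = if v = x then 0 else 1 + (P *ᵥ f) v := by
  obtain ⟨f, hf⟩ := Matrix.mulVec_surjective_iff_isUnit.2
    (isUnit_one_sub_Dmat_mul hP hirr x) (Dmat x *ᵥ 1)
  have hrec (v : V) : f v = if v = x then 0 else 1 + (P *ᵥ f) v := by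
    rw [Matrix.sub_mulVec, Matrix.one_mulVec, ← Matrix.mulVec_mulVec, sub_eq_iff_eq_add,
      ← Matrix.mulVec_add] at hf
    exact (congrFun hf v).trans (Dmat_mulVec x _ v)
  refine ⟨f, nonneg_of_mulVec_le hP hirr (x := x) ?_ fun v hv => ?_, hrec⟩
  · rw [hrec x, if_pos rfl]
  · rw [hrec v, if_neg hv]
    linarith

theorem summable_survProb (hP : P ∈ Matrix.rowStochastic ℝ V) (hirr : P.IsIrreducible)
    (x y : V) : Summable (survProb P x y) := by
  obtain ⟨f, f_nonneg, hf⟩ := exists_nonneg_eq_one_add_mulVec hP hirr x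
  have sum_le (T : ℕ) : ∀ v, ∑ t ∈ range T, survProb P x v t ≤ f v := by
    induction T with
    | zero => simpa using f_nonneg
    | succ T ih =>
      intro v
      rw [sum_range_succ', hf v]
      simp only [survProb_zero, survProb_succ]
      split_ifs with hv
      · simp
      · rw [add_comm]
        simp only [Matrix.mulVec, dotProduct]
        rw [sum_comm]
        simp only [← mul_sum]
        gcongr with z
        · exact hirr.nonneg v z
        · exact ih z
  exact summable_of_sum_range_le (survProb_nonneg hirr.nonneg x y) fun T => sum_le T y

theorem Ehit_self (P : Matrix V V ℝ) (x : V) : Ehit P x x = 0 := by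
  have survProb_self (t : ℕ) : survProb P x x t = 0 := by
    cases t <;> simp [survProb_zero, survProb_succ]
  simp only [Ehit, survProb_self, tsum_zero]

theorem Ehit_nonneg (hP : ∀ a b, 0 ≤ P a b) (x y : V) : 0 ≤ Ehit P x y :=
  tsum_nonneg (survProb_nonneg hP x y)

theorem Ehit_of_ne (hP : P ∈ Matrix.rowStochastic ℝ V) (hirr : P.IsIrreducible) {x y : V}
    (hyx : y ≠ x) : Ehit P x y = 1 + (P *ᵥ Ehit P x) y := by
  rw [Ehit, (summable_survProb hP hirr x y).tsum_eq_zero_add]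
  simp only [survProb_zero, survProb_succ, if_neg hyx, Matrix.mulVec, dotProduct]
  rw [Summable.tsum_finsetSum fun z _ => (summable_survProb hP hirr x z).mul_left _]
  simp only [tsum_mul_left, Ehit]

theorem Ehit_le_one_add_mulVec (hP : P ∈ Matrix.rowStochastic ℝ V) (hirr : P.IsIrreducible)
    (x y : V) : Ehit P x y ≤ 1 + (P *ᵥ Ehit P x) y := by
  rcases eq_or_ne y x with rfl | hyx
  · rw [Ehit_self]
    linarith [Matrix.nonneg_mulVec_of_mem_rowStochastic hP (Ehit_nonneg hirr.nonneg y) y]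
  · exact (Ehit_of_ne hP hirr hyx).le

theorem one_le_Ehit (hP : P ∈ Matrix.rowStochastic ℝ V) (hirr : P.IsIrreducible) {x y : V}
    (hyx : y ≠ x) : 1 ≤ Ehit P x y := by
  rw [Ehit_of_ne hP hirr hyx]
  linarith [Matrix.nonneg_mulVec_of_mem_rowStochastic hP (Ehit_nonneg hirr.nonneg x) y]

theorem Ehit_triangle (hP : P ∈ Matrix.rowStochastic ℝ V) (hirr : P.IsIrreducible) (x y z : V) :
    Ehit P z x ≤ Ehit P y x + Ehit P z y := by
  let slack : V → ℝ := Ehit P y - Ehit P z + Function.const V (Ehit P z y)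
  have mulVec_slack (w : V) :
      (P *ᵥ slack) w = (P *ᵥ Ehit P y) w - (P *ᵥ Ehit P z) w + Ehit P z y := by
    have mulVec_const : (P *ᵥ Function.const V (Ehit P z y)) w = Ehit P z y := by
      simp only [Matrix.mulVec, dotProduct, Function.const_apply, ← sum_mul,
        Matrix.sum_row_of_mem_rowStochastic hP, one_mul]
    simp only [slack, Matrix.mulVec_add, Matrix.mulVec_sub, Pi.add_apply, Pi.sub_apply,
      mulVec_const]
  have superharmonic (w : V) (hw : w ≠ y) : (P *ᵥ slack) w ≤ slack w := by
    rw [mulVec_slack]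
    simp only [slack, Pi.add_apply, Pi.sub_apply, Function.const_apply]
    linarith [Ehit_of_ne hP hirr hw, Ehit_le_one_add_mulVec hP hirr z w]
  have slack_nonneg := nonneg_of_mulVec_le hP hirr (by simp [slack, Ehit_self]) superharmonic x
  simp only [slack, Pi.add_apply, Pi.sub_apply, Function.const_apply] at slack_nonneg
  linarith

/-- The commute time `E_x[τ_y] + E_y[τ_x]` between two states of a Markov chain. -/
noncomputable def commuteTime (P : Matrix V V ℝ) (x y : V) : ℝ := Ehit P x y + Ehit P y x

theorem commuteTime_self (P : Matrix V V ℝ) (x : V) : commuteTime P x x = 0 := by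
  rw [commuteTime, Ehit_self, add_zero]

theorem commuteTime_nonneg (hP : ∀ a b, 0 ≤ P a b) (x y : V) : 0 ≤ commuteTime P x y :=
  add_nonneg (Ehit_nonneg hP x y) (Ehit_nonneg hP y x)

theorem two_le_commuteTime (hP : P ∈ Matrix.rowStochastic ℝ V) (hirr : P.IsIrreducible) {x y : V}
    (hxy : x ≠ y) : 2 ≤ commuteTime P x y := by
  rw [commuteTime]
  linarith [one_le_Ehit hP hirr hxy, one_le_Ehit hP hirr hxy.symm]

theorem commuteTime_triangle (hP : P ∈ Matrix.rowStochastic ℝ V) (hirr : P.IsIrreducible)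
    (x y z : V) : commuteTime P x z ≤ commuteTime P x y + commuteTime P y z := by
  simp only [commuteTime]
  linarith [Ehit_triangle hP hirr x y z, Ehit_triangle hP hirr z y x]

theorem commuteTime_le_length_mul (hP : P ∈ Matrix.rowStochastic ℝ V) (hirr : P.IsIrreducible)
    {G : SimpleGraph V} {c : ℝ} (hc : ∀ a b, G.Adj a b → commuteTime P a b ≤ c) {x y : V}
    (p : G.Walk x y) : commuteTime P x y ≤ p.length * c := by
  induction p with
  | nil => simp [commuteTime_self]
  | @cons a b d hab p ih =>
    rw [SimpleGraph.Walk.length_cons, Nat.cast_succ, add_one_mul]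
    linarith [commuteTime_triangle hP hirr a b d, hc a b hab]

theorem commuteTime_le_iSup (P : Matrix V V ℝ) (x y : V) :
    commuteTime P x y ≤ ⨆ q : V × V, commuteTime P q.1 q.2 :=
  le_ciSup (f := fun q : V × V => commuteTime P q.1 q.2) (Set.finite_range _).bddAbove (x, y)

end HittingTimes

section DirichletForm

open scoped Matrix

variable [Fintype V] {pi : V → ℝ} {P : Matrix V V ℝ}

/-- Detailed balance: the Markov chain with transition matrix `P` is reversible with respect to
`pi`. -/
def DetailedBalance (pi : V → ℝ) (P : Matrix V V ℝ) : Prop :=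
  ∀ x y, pi x * P x y = pi y * P y x

/-- The Dirichlet form `⟨f, (I - P) g⟩` in `L²(pi)` of the Markov chain with transition
matrix `P`. -/
noncomputable def dirichletForm (pi : V → ℝ) (P : Matrix V V ℝ) (f g : V → ℝ) : ℝ :=
  pip pi f (g - P *ᵥ g)

theorem pip_mulVec_eq_sub_dirichletForm (pi : V → ℝ) (P : Matrix V V ℝ) (f : V → ℝ) :
    pip pi f (P *ᵥ f) = pip pi f f - dirichletForm pi P f f := by
  simp only [dirichletForm, pip, ← sum_sub_distrib]
  exact sum_congr rfl fun x _ => by rw [Pi.sub_apply]; ring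

theorem sum_sum_mul_sq_sub (h1 : ∑ x, pi x = 1) {f : V → ℝ} (h0 : ∑ x, pi x * f x = 0) :
    ∑ x, ∑ y, pi x * pi y * (f x - f y) ^ 2 = 2 * pip pi f f := by
  have expand (x y : V) : pi x * pi y * (f x - f y) ^ 2 =
      pi x * f x * f x * pi y + pi x * (pi y * f y * f y) - 2 * (pi x * f x) * (pi y * f y) := by
    ring
  simp only [expand, sum_sub_distrib, sum_add_distrib, ← mul_sum, ← sum_mul, h1, h0, pip]
  ring

variable [DecidableEq V]

theorem DetailedBalance.vecMul_eq (hrev : DetailedBalance pi P)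
    (hP : P ∈ Matrix.rowStochastic ℝ V) : pi ᵥ* P = pi := by
  funext y
  simp only [Matrix.vecMul, dotProduct, hrev _ y, ← mul_sum,
    Matrix.sum_row_of_mem_rowStochastic hP, mul_one]

theorem dirichletForm_eq_sum (hP : P ∈ Matrix.rowStochastic ℝ V) (hrev : DetailedBalance pi P)
    (f g : V → ℝ) :
    dirichletForm pi P f g =
      1 / 2 * ∑ x, ∑ y, pi x * P x y * ((f x - f y) * (g x - g y)) := by
  have sub_mulVec (x : V) : (g - P *ᵥ g) x = ∑ y, P x y * (g x - g y) := by
    simp only [mul_sub, sum_sub_distrib, ← sum_mul, Matrix.sum_row_of_mem_rowStochastic hP, one_mul]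
    rfl
  have form_eq : dirichletForm pi P f g = ∑ x, ∑ y, pi x * P x y * (f x * (g x - g y)) := by
    simp only [dirichletForm, pip, sub_mulVec, mul_sum]
    exact sum_congr rfl fun x _ => sum_congr rfl fun y _ => by ring
  have form_eq_swap : dirichletForm pi P f g =
      ∑ x, ∑ y, pi x * P x y * (f y * (g y - g x)) := by
    rw [form_eq, sum_comm]
    exact sum_congr rfl fun x _ => sum_congr rfl fun y _ => by rw [hrev x y]
  have split : ∑ x, ∑ y, pi x * P x y * ((f x - f y) * (g x - g y)) =
      dirichletForm pi P f g + dirichletForm pi P f g := by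
    nth_rw 1 [form_eq]
    rw [form_eq_swap]
    simp only [← sum_add_distrib]
    exact sum_congr rfl fun x _ => sum_congr rfl fun y _ => by ring
  rw [split]
  ring

theorem dirichletForm_self_nonneg (hP : P ∈ Matrix.rowStochastic ℝ V)
    (hrev : DetailedBalance pi P) (hpi : ∀ x, 0 ≤ pi x) (f : V → ℝ) :
    0 ≤ dirichletForm pi P f f := by
  rw [dirichletForm_eq_sum hP hrev]
  exact mul_nonneg one_half_pos.le (sum_nonneg fun x _ => sum_nonneg fun y _ =>
    mul_nonneg (mul_nonneg (hpi x) (Matrix.nonneg_of_mem_rowStochastic hP)) (mul_self_nonneg _))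

theorem dirichletForm_sq_le (hP : P ∈ Matrix.rowStochastic ℝ V) (hrev : DetailedBalance pi P)
    (hpi : ∀ x, 0 ≤ pi x) (f g : V → ℝ) :
    dirichletForm pi P f g ^ 2 ≤ dirichletForm pi P f f * dirichletForm pi P g g := by
  have weight_nonneg (e : V × V) : 0 ≤ pi e.1 * P e.1 e.2 :=
    mul_nonneg (hpi e.1) (Matrix.nonneg_of_mem_rowStochastic hP)
  have cauchy_schwarz := sum_sq_le_sum_mul_sum_of_sq_le_mul (univ : Finset (V × V))
    (r := fun e => pi e.1 * P e.1 e.2 * ((f e.1 - f e.2) * (g e.1 - g e.2)))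
    (f := fun e => pi e.1 * P e.1 e.2 * ((f e.1 - f e.2) * (f e.1 - f e.2)))
    (g := fun e => pi e.1 * P e.1 e.2 * ((g e.1 - g e.2) * (g e.1 - g e.2)))
    (fun e _ => mul_nonneg (weight_nonneg e) (mul_self_nonneg _))
    (fun e _ => mul_nonneg (weight_nonneg e) (mul_self_nonneg _)) (fun e _ => le_of_eq (by ring))
  simp only [Fintype.sum_prod_type] at cauchy_schwarz
  simp only [dirichletForm_eq_sum hP hrev]
  linarith

theorem mul_sq_sub_le_dirichletForm (hP : P ∈ Matrix.rowStochastic ℝ V)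
    (hrev : DetailedBalance pi P) (hpi : ∀ x, 0 ≤ pi x) (f : V → ℝ) (x y : V) :
    pi x * P x y * (f x - f y) ^ 2 ≤ dirichletForm pi P f f := by
  rcases eq_or_ne x y with rfl | hxy
  · simpa using dirichletForm_self_nonneg hP hrev hpi f
  let energy (e : V × V) : ℝ := pi e.1 * P e.1 e.2 * ((f e.1 - f e.2) * (f e.1 - f e.2))
  have pair_le : ∑ e ∈ {(x, y), (y, x)}, energy e ≤ ∑ e, energy e :=
    sum_le_sum_of_subset_of_nonneg (subset_univ _) fun e _ _ =>
      mul_nonneg (mul_nonneg (hpi e.1) (Matrix.nonneg_of_mem_rowStochastic hP)) (mul_self_nonneg _)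
  rw [sum_pair (by simp [hxy]), Fintype.sum_prod_type] at pair_le
  simp only [energy, hrev y x] at pair_le
  rw [dirichletForm_eq_sum hP hrev]
  linarith

end DirichletForm

section CommuteTimes

open scoped Matrix

variable [Fintype V] [DecidableEq V] {pi : V → ℝ} {P : Matrix V V ℝ}

theorem mul_Ehit_sub_mulVec (hP : P ∈ Matrix.rowStochastic ℝ V) (hirr : P.IsIrreducible)
    (hstat : pi ᵥ* P = pi) (hsum : ∑ x, pi x = 1) (x y : V) :
    pi y * (Ehit P x - P *ᵥ Ehit P x) y = pi y - if y = x then 1 else 0 := by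
  have off_target (v : V) (hv : v ≠ x) : pi v * (Ehit P x - P *ᵥ Ehit P x) v = pi v := by
    rw [Pi.sub_apply, Ehit_of_ne hP hirr hv, add_sub_cancel_right, mul_one]
  have total : ∑ v, pi v * (Ehit P x - P *ᵥ Ehit P x) v = 0 := by
    change pi ⬝ᵥ (Ehit P x - P *ᵥ Ehit P x) = 0
    rw [dotProduct_sub, Matrix.dotProduct_mulVec, hstat, sub_self]
  split_ifs with hy
  · subst hy
    rw [← add_sum_erase _ _ (mem_univ y),
      sum_congr rfl fun v hv => off_target v (ne_of_mem_erase hv)] at total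
    rw [← add_sum_erase _ _ (mem_univ y)] at hsum
    linarith
  · rw [off_target y hy, sub_zero]

theorem dirichletForm_Ehit_sub_Ehit (hP : P ∈ Matrix.rowStochastic ℝ V) (hirr : P.IsIrreducible)
    (hstat : pi ᵥ* P = pi) (hsum : ∑ x, pi x = 1) (f : V → ℝ) (x y : V) :
    dirichletForm pi P f (Ehit P y - Ehit P x) = f x - f y := by
  have pointwise (v : V) :
      pi v * f v * (Ehit P y - Ehit P x - P *ᵥ (Ehit P y - Ehit P x)) v =
        (if v = x then f v else 0) - if v = y then f v else 0 := by
    have hx := mul_Ehit_sub_mulVec hP hirr hstat hsum x v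
    have hy := mul_Ehit_sub_mulVec hP hirr hstat hsum y v
    rw [Matrix.mulVec_sub]
    simp only [Pi.sub_apply] at hx hy ⊢
    calc pi v * f v * (Ehit P y v - Ehit P x v - ((P *ᵥ Ehit P y) v - (P *ᵥ Ehit P x) v))
        = f v * (pi v * (Ehit P y v - (P *ᵥ Ehit P y) v) -
            pi v * (Ehit P x v - (P *ᵥ Ehit P x) v)) := by ring
      _ = _ := by
        rw [hx, hy]
        split_ifs <;> ring
  simp only [dirichletForm, pip, pointwise, sum_sub_distrib, Fintype.sum_ite_eq']

theorem dirichletForm_Ehit_sub_Ehit_self (hP : P ∈ Matrix.rowStochastic ℝ V)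
    (hirr : P.IsIrreducible) (hstat : pi ᵥ* P = pi) (hsum : ∑ x, pi x = 1) (x y : V) :
    dirichletForm pi P (Ehit P y - Ehit P x) (Ehit P y - Ehit P x) = commuteTime P x y := by
  rw [dirichletForm_Ehit_sub_Ehit hP hirr hstat hsum]
  simp only [Pi.sub_apply, Ehit_self, commuteTime]
  ring

theorem sq_sub_le_commuteTime_mul_dirichletForm (hP : P ∈ Matrix.rowStochastic ℝ V)
    (hirr : P.IsIrreducible) (hrev : DetailedBalance pi P) (hpi : pi ∈ stdSimplex ℝ V)
    (f : V → ℝ) (x y : V) :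
    (f x - f y) ^ 2 ≤ commuteTime P x y * dirichletForm pi P f f := by
  have hstat := hrev.vecMul_eq hP
  have h := dirichletForm_sq_le hP hrev hpi.1 f (Ehit P y - Ehit P x)
  rwa [dirichletForm_Ehit_sub_Ehit_self hP hirr hstat hpi.2,
    dirichletForm_Ehit_sub_Ehit hP hirr hstat hpi.2, mul_comm] at h

theorem mul_commuteTime_le_one (hP : P ∈ Matrix.rowStochastic ℝ V) (hirr : P.IsIrreducible)
    (hrev : DetailedBalance pi P) (hpi : pi ∈ stdSimplex ℝ V) (x y : V) :
    pi x * P x y * commuteTime P x y ≤ 1 := by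
  have hstat := hrev.vecMul_eq hP
  have edge_le := mul_sq_sub_le_dirichletForm hP hrev hpi.1 (Ehit P y - Ehit P x) x y
  rw [← dirichletForm_Ehit_sub_Ehit hP hirr hstat hpi.2,
    dirichletForm_Ehit_sub_Ehit_self hP hirr hstat hpi.2] at edge_le
  rcases (commuteTime_nonneg hirr.nonneg x y).eq_or_lt with h0 | hpos
  · rw [← h0, mul_zero]
    exact zero_le_one
  · refine le_of_mul_le_mul_right ?_ hpos
    linarith

theorem pip_self_le_mul_dirichletForm (hP : P ∈ Matrix.rowStochastic ℝ V)
    (hirr : P.IsIrreducible) (hrev : DetailedBalance pi P) (hpi : pi ∈ stdSimplex ℝ V) {C : ℝ}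
    (hC : ∀ x y, commuteTime P x y ≤ C) {f : V → ℝ} (hf : ∑ x, pi x * f x = 0) :
    pip pi f f ≤ C / 2 * dirichletForm pi P f f := by
  have energy_nonneg := dirichletForm_self_nonneg hP hrev hpi.1 f
  have sq_sub_le (x y : V) : (f x - f y) ^ 2 ≤ C * dirichletForm pi P f f :=
    (sq_sub_le_commuteTime_mul_dirichletForm hP hirr hrev hpi f x y).trans
      (mul_le_mul_of_nonneg_right (hC x y) energy_nonneg)
  have two_mul_le : 2 * pip pi f f ≤ C * dirichletForm pi P f f :=
    calc 2 * pip pi f f = ∑ x, ∑ y, pi x * pi y * (f x - f y) ^ 2 :=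
          (sum_sum_mul_sq_sub hpi.2 hf).symm
      _ ≤ ∑ x, ∑ y, pi x * pi y * (C * dirichletForm pi P f f) :=
          sum_le_sum fun x _ => sum_le_sum fun y _ =>
            mul_le_mul_of_nonneg_left (sq_sub_le x y) (mul_nonneg (hpi.1 x) (hpi.1 y))
      _ = C * dirichletForm pi P f f := by
          simp only [← sum_mul, ← mul_sum, hpi.2, mul_one, one_mul]
  linarith

theorem secondEig_le_one_sub_two_div [Nontrivial V] (hP : P ∈ Matrix.rowStochastic ℝ V)
    (hirr : P.IsIrreducible) (hrev : DetailedBalance pi P) (hpi : pi ∈ stdSimplex ℝ V) {C : ℝ}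
    (hC : ∀ x y, commuteTime P x y ≤ C) : secondEig pi P ≤ 1 - 2 / C := by
  obtain ⟨x, y, hxy⟩ := exists_pair_ne V
  have two_le_C : 2 ≤ C := (two_le_commuteTime hP hirr hxy).trans (hC x y)
  have hC0 : 0 < C := two_pos.trans_le two_le_C
  -- Since `sSup ∅ = 0`, the bound on the supremum has to be nonnegative as well.
  refine Real.sSup_le ?_ (sub_nonneg.2 ((div_le_one hC0).2 two_le_C))
  rintro _ ⟨f, hf1, hf0, rfl⟩
  have poincare := pip_self_le_mul_dirichletForm hP hirr hrev hpi hC hf0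
  rw [hf1] at poincare
  rw [pip_mulVec_eq_sub_dirichletForm, hf1, sub_le_sub_iff_left, div_le_iff₀ hC0]
  linarith

theorem trelT_le_iSup_commuteTime_div_two [Nontrivial V] (hP : P ∈ Matrix.rowStochastic ℝ V)
    (hirr : P.IsIrreducible) (hrev : DetailedBalance pi P) (hpi : pi ∈ stdSimplex ℝ V) :
    trelT pi P ≤ (⨆ q : V × V, commuteTime P q.1 q.2) / 2 := by
  obtain ⟨x, y, hxy⟩ := exists_pair_ne V
  have iSup_pos : 0 < ⨆ q : V × V, commuteTime P q.1 q.2 :=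
    two_pos.trans_le ((two_le_commuteTime hP hirr hxy).trans (commuteTime_le_iSup P x y))
  have gap_ge := secondEig_le_one_sub_two_div hP hirr hrev hpi (commuteTime_le_iSup P)
  exact (one_div_le_one_div_of_le (div_pos two_pos iSup_pos) (by linarith)).trans_eq
    (one_div_div _ _)

end CommuteTimes

section Geodesics

theorem exists_forall_dist_eq {G : SimpleGraph V} (hconn : G.Connected) (x y : V) :
    ∃ v : ℕ → V, ∀ i ≤ G.dist x y, G.dist x (v i) = i := by
  obtain ⟨p, hp⟩ := hconn.exists_walk_length_eq_dist x y
  refine ⟨p.getVert, fun i hi => ?_⟩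
  have take_le := SimpleGraph.dist_le (p.take i)
  have drop_le := SimpleGraph.dist_le (p.drop i)
  have triangle := hconn.dist_triangle (u := x) (v := p.getVert i) (w := y)
  rw [SimpleGraph.Walk.take_length] at take_le
  rw [SimpleGraph.Walk.drop_length] at drop_le
  omega

variable [Fintype V] {G : SimpleGraph V} [DecidableRel G.Adj]

theorem dist_succ_mul_minDegree_le (hconn : G.Connected) (x y : V) :
    (G.dist x y + 1) * G.minDegree ≤ 3 * Fintype.card V := by
  obtain ⟨v, hv⟩ := exists_forall_dist_eq hconn x y
  have minDegree_le (i : ℕ) :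
      G.minDegree ≤ #(univ.bipartiteAbove (fun i w => G.Adj (v i) w) i) := by
    rw [bipartiteAbove, ← G.neighborFinset_eq_filter, G.card_neighborFinset_eq_degree]
    exact G.minDegree_le_degree (v i)
  have card_le_three (w : V) :
      #((range (G.dist x y + 1)).bipartiteBelow (fun i w => G.Adj (v i) w) w) ≤ 3 := by
    have levels_subset :
        (range (G.dist x y + 1)).bipartiteBelow (fun i w => G.Adj (v i) w) w ⊆
          Icc (G.dist x w - 1) (G.dist x w + 1) := by
      intro i hi
      rw [mem_bipartiteBelow, mem_range] at hi
      have hi_level := hv i (Nat.le_of_lt_succ hi.1)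
      have hdist := hi.2.diff_dist_adj (u := x)
      rw [mem_Icc]
      omega
    calc _ ≤ #(Icc (G.dist x w - 1) (G.dist x w + 1)) := card_le_card levels_subset
      _ ≤ 3 := by rw [Nat.card_Icc]; omega
  have double_count := card_mul_le_card_mul (s := range (G.dist x y + 1)) (t := univ)
    (fun i w => G.Adj (v i) w) (fun i _ => minDegree_le i) (fun w _ => card_le_three w)
  rwa [card_range, card_univ, mul_comm (Fintype.card V)] at double_count

end Geodesics

section DegreeSum

variable [Fintype V] {G : SimpleGraph V} [DecidableRel G.Adj]

theorem sum_degree_pos [Nonempty V] (hdeg : ∀ v, 0 < G.degree v) :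
    0 < ∑ v, (G.degree v : ℝ) :=
  sum_pos (fun v _ => Nat.cast_pos.2 (hdeg v)) univ_nonempty

theorem two_le_sum_degree [Nontrivial V] (hdeg : ∀ v, 0 < G.degree v) :
    2 ≤ ∑ v, (G.degree v : ℝ) :=
  calc (2 : ℝ) ≤ Fintype.card V := by exact_mod_cast Fintype.one_lt_card
    _ = ∑ _v : V, (1 : ℝ) := by simp
    _ ≤ ∑ v, (G.degree v : ℝ) := sum_le_sum fun v _ => Nat.one_le_cast.2 (hdeg v)

end DegreeSum

section LazyWalk

variable [Fintype V] [DecidableEq V] (G : SimpleGraph V) [DecidableRel G.Adj]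

theorem lazyP_nonneg (x y : V) : 0 ≤ lazyP G x y := by
  simp only [lazyP, Matrix.of_apply]
  split_ifs <;> positivity

theorem lazyP_self (x : V) : lazyP G x x = 1 / 2 := by
  simp [lazyP]

variable {G}

theorem lazyP_of_adj {x y : V} (h : G.Adj x y) : lazyP G x y = 1 / (2 * (G.degree x : ℝ)) := by
  simp [lazyP, h, h.ne]

theorem lazyP_mem_rowStochastic (hdeg : ∀ v, 0 < G.degree v) :
    lazyP G ∈ Matrix.rowStochastic ℝ V := by
  refine Matrix.mem_rowStochastic_iff_sum.2 ⟨lazyP_nonneg G, fun x => ?_⟩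
  have hx : (G.degree x : ℝ) ≠ 0 := Nat.cast_ne_zero.2 (hdeg x).ne'
  have entry (y : V) : lazyP G x y =
      (if x = y then 1 / 2 else 0) + if G.Adj x y then 1 / (2 * (G.degree x : ℝ)) else 0 := by
    rcases eq_or_ne x y with rfl | hxy
    · simp [lazyP]
    · simp [lazyP, hxy]
  simp only [entry, sum_add_distrib, Fintype.sum_ite_eq]
  rw [← sum_filter, ← G.neighborFinset_eq_filter, sum_const, G.card_neighborFinset_eq_degree,
    nsmul_eq_mul]
  field_simp
  norm_num

theorem lazyP_pos_of_adj {x y : V} (h : G.Adj x y) : 0 < lazyP G x y := by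
  have := h.degree_pos_left
  rw [lazyP_of_adj h]
  positivity

theorem lazyP_isIrreducible (hconn : G.Connected) : (lazyP G).IsIrreducible := by
  let := (lazyP G).toQuiver
  have strongly_connected : Quiver.IsStronglyConnected V := by
    intro x y
    obtain ⟨p⟩ := hconn x y
    induction p with
    | nil => exact ⟨Quiver.Path.nil⟩
    | @cons a b _ h _ ih =>
      have edge : a ⟶ b := ⟨lazyP_pos_of_adj h⟩
      exact ih.map edge.toPath.comp
  obtain ⟨x⟩ := hconn.nonempty
  have loop : x ⟶ x := ⟨by rw [lazyP_self]; exact one_half_pos⟩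
  exact ⟨lazyP_nonneg G, strongly_connected.isSStronglyConnected_of_hom loop⟩

theorem lazyPi_mul_lazyP_of_adj {x y : V} (h : G.Adj x y) :
    lazyPi G x * lazyP G x y = 1 / (2 * ∑ v, (G.degree v : ℝ)) := by
  have hx : (G.degree x : ℝ) ≠ 0 := Nat.cast_ne_zero.2 h.degree_pos_left.ne'
  rw [lazyPi, lazyP_of_adj h]
  field_simp

variable (G) in
theorem lazyP_detailedBalance : DetailedBalance (lazyPi G) (lazyP G) := by
  intro x y
  rcases eq_or_ne x y with rfl | hxy
  · rfl
  by_cases h : G.Adj x y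
  · rw [lazyPi_mul_lazyP_of_adj h, lazyPi_mul_lazyP_of_adj h.symm]
  · simp [lazyP, hxy, hxy.symm, h, G.adj_comm y x]

theorem lazyPi_mem_stdSimplex [Nonempty V] (hdeg : ∀ v, 0 < G.degree v) :
    lazyPi G ∈ stdSimplex ℝ V := by
  refine ⟨fun x => by rw [lazyPi]; positivity, ?_⟩
  simp only [lazyPi, ← sum_div]
  exact div_self (sum_degree_pos hdeg).ne'

theorem dminR_eq_minDegree [Nonempty V] : dminR G = G.minDegree := by
  obtain ⟨u, hu⟩ := G.exists_minimal_degree_vertex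
  refine le_antisymm ?_ (le_inf' _ _ fun v _ => Nat.cast_le.2 (G.minDegree_le_degree v))
  rw [hu]
  exact inf'_le _ (mem_univ u)

theorem commuteTime_lazyP_le_of_adj [Nontrivial V] (hconn : G.Connected) {x y : V}
    (h : G.Adj x y) : commuteTime (lazyP G) x y ≤ 2 * ∑ v, (G.degree v : ℝ) := by
  have hdeg (v : V) : 0 < G.degree v := hconn.preconnected.degree_pos_of_nontrivial v
  have hS := sum_degree_pos hdeg
  have edge_le := mul_commuteTime_le_one (lazyP_mem_rowStochastic hdeg)
    (lazyP_isIrreducible hconn) (lazyP_detailedBalance G) (lazyPi_mem_stdSimplex hdeg) x y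
  rwa [lazyPi_mul_lazyP_of_adj h, one_div_mul_eq_div, div_le_one (by positivity)] at edge_le

theorem commuteTime_lazyP_le_dist_mul [Nontrivial V] (hconn : G.Connected) (x y : V) :
    commuteTime (lazyP G) x y ≤ G.dist x y * (2 * ∑ v, (G.degree v : ℝ)) := by
  have hdeg (v : V) : 0 < G.degree v := hconn.preconnected.degree_pos_of_nontrivial v
  obtain ⟨p, hp⟩ := hconn.exists_walk_length_eq_dist x y
  rw [← hp]
  exact commuteTime_le_length_mul (lazyP_mem_rowStochastic hdeg) (lazyP_isIrreducible hconn)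
    (fun _ _ => commuteTime_lazyP_le_of_adj hconn) p

theorem commuteTime_lazyP_le [Nontrivial V] (hconn : G.Connected) (x y : V) :
    commuteTime (lazyP G) x y ≤
      6 * (davgR G / dminR G) * (Fintype.card V : ℝ) ^ 2 - 4 := by
  have hdeg (v : V) : 0 < G.degree v := hconn.preconnected.degree_pos_of_nontrivial v
  have hδ : (0 : ℝ) < G.minDegree := Nat.cast_pos.2 hconn.preconnected.minDegree_pos_of_nontrivial
  have hS := two_le_sum_degree hdeg
  have dist_le : (G.dist x y : ℝ) + 1 ≤ 3 * Fintype.card V / G.minDegree := by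
    rw [le_div_iff₀ hδ]
    exact_mod_cast dist_succ_mul_minDegree_le hconn x y
  calc commuteTime (lazyP G) x y ≤ G.dist x y * (2 * ∑ v, (G.degree v : ℝ)) :=
        commuteTime_lazyP_le_dist_mul hconn x y
    _ = (G.dist x y + 1) * (2 * ∑ v, (G.degree v : ℝ)) - 2 * ∑ v, (G.degree v : ℝ) := by ring
    _ ≤ 3 * Fintype.card V / G.minDegree * (2 * ∑ v, (G.degree v : ℝ)) - 4 := by
        gcongr
        linarith
    _ = 6 * (davgR G / dminR G) * (Fintype.card V : ℝ) ^ 2 - 4 := by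
        rw [davgR, dminR_eq_minDegree]
        field_simp
        ring

end LazyWalk

theorem stmt15 [Fintype V] [Nonempty V] [DecidableEq V] (G : SimpleGraph V)
    [DecidableRel G.Adj] (hconn : G.Connected) (hcard : 2 ≤ Fintype.card V) :
    trelT (lazyPi G) (lazyP G) ≤
        (⨆ q : V × V, (Ehit (lazyP G) q.1 q.2 + Ehit (lazyP G) q.2 q.1)) ∧
      (⨆ q : V × V, (Ehit (lazyP G) q.1 q.2 + Ehit (lazyP G) q.2 q.1)) ≤
        6 * (davgR G / dminR G) * (Fintype.card V : ℝ) ^ 2 - 4 := by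
  have : Nontrivial V := Fintype.one_lt_card_iff_nontrivial.1 hcard
  have hdeg (v : V) : 0 < G.degree v := hconn.preconnected.degree_pos_of_nontrivial v
  refine ⟨?_, ciSup_le fun q => commuteTime_lazyP_le hconn q.1 q.2⟩
  have iSup_nonneg : 0 ≤ ⨆ q : V × V, commuteTime (lazyP G) q.1 q.2 :=
    Real.iSup_nonneg fun q => commuteTime_nonneg (lazyP_nonneg G) q.1 q.2
  exact (trelT_le_iSup_commuteTime_div_two (lazyP_mem_rowStochastic hdeg)
    (lazyP_isIrreducible hconn) (lazyP_detailedBalance G)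
    (lazyPi_mem_stdSimplex hdeg)).trans (half_le_self iSup_nonneg)
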